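/- arXiv:1312.4609 — 2 statements merged into one kernel-verified Lean document; each statement's English description precedes it below -/
import Mathlib

section
/- Let (g₀, g₋₁, l₁, l₂, l₃) be a 2-term L∞-algebra over ℝ. Then the associated data g̃ (with g̃₋₁ = g₋₁, g̃₀ = g₀ ⊕ Hom(g₀, g₋₁), and structure maps l̃₁, l̃₂, l̃₃ defined by the explicit formulas below) is again a 2-term L∞-algebra, i.e. (g̃₀, g̃₋₁, l̃₁, l̃₂, l̃₃) satisfies the identities (a)–(e). -/
/-- A 2-term L∞-algebra over ℝ: vector spaces `G0` (degree 0) and `G1` (degree -1),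
a linear map `l1 : G1 → G0`, a skew-symmetric bilinear map `l2 : G0 × G0 → G0`,
a bilinear map `l2' : G0 × G1 → G1`, and an alternating trilinear map
`l3 : G0 × G0 × G0 → G1` satisfying the 2-term L∞ identities (a)-(e). -/
structure TwoTermLinfty (G0 G1 : Type*) [AddCommGroup G0] [Module ℝ G0]
    [AddCommGroup G1] [Module ℝ G1] where
  l1 : G1 →ₗ[ℝ] G0
  l2 : G0 →ₗ[ℝ] G0 →ₗ[ℝ] G0
  l2' : G0 →ₗ[ℝ] G1 →ₗ[ℝ] G1
  l3 : G0 →ₗ[ℝ] G0 →ₗ[ℝ] G0 →ₗ[ℝ] G1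
  skew : ∀ x y, l2 x y = - l2 y x
  alt₁ : ∀ x y z, l3 x y z = - l3 y x z
  alt₂ : ∀ x y z, l3 x y z = - l3 x z y
  ident_a : ∀ x m, l1 (l2' x m) = l2 x (l1 m)
  ident_b : ∀ m n, l2' (l1 m) n = - l2' (l1 n) m
  ident_c : ∀ x y z,
    l2 x (l2 y z) + l2 y (l2 z x) + l2 z (l2 x y) = l1 (l3 x y z)
  ident_d : ∀ x y m,
    l3 x y (l1 m) = l2' x (l2' y m) - l2' y (l2' x m) - l2' (l2 x y) m
  ident_e : ∀ w x y z,
    l3 (l2 w x) y z - l3 (l2 w y) x z + l3 (l2 w z) x y + l3 (l2 x y) w z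
      - l3 (l2 x z) w y + l3 (l2 y z) w x
    = l2' w (l3 x y z) - l2' x (l3 w y z) + l2' y (l3 w x z) - l2' z (l3 w x y)

/-!
On `E = g₀ ⊕ Hom(g₀, g₋₁)` the bracket `l̃₂` is the skew-symmetric part of a non-skew bracket `∘`,
just as the Courant bracket is that of the Dorfman bracket. Each `a = (x, φ)` gives a derivation up
to homotopy of `g`, acting by `l₂(x, -) + l₁ ∘ φ` on `g₀` and by `l₂(x, -) + φ ∘ l₁` on `g₋₁`, and
`a ∘ b` is its action on `b`. These derivations compose like the bracket, so `∘` satisfies the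
Leibniz identity; it also preserves the pairing `⟪(x, φ), (y, ψ)⟫ = φ y + ψ x`, and
`a ∘ b + b ∘ a = l̃₁ ⟪a, b⟫`. As Roytenberg and Weinstein observed for Courant algebroids, these
properties alone turn the skew-symmetrization into a 2-term L∞-algebra. Its ternary map is built
from `∘`, the pairing and `l̃₁`, so `w ∘ -` acts on it by derivations, and summing that over the
four arguments is identity (e).
-/

/-- A Courant–Dorfman algebra with its ring of functions and anchor forgotten: a Leibniz bracket on
`E`, an `M`-valued symmetric pairing and a map `d : M → E`. The map `m ↦ ⟪a, d m⟫` plays the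
role of the anchor of `a`, and `pairing_d_pairing` is invariance of the pairing. -/
structure DorfmanAlgebra (R E M : Type*) [CommRing R] [AddCommGroup E] [Module R E]
    [AddCommGroup M] [Module R M] where
  bracket : E →ₗ[R] E →ₗ[R] E
  pairing : E →ₗ[R] E →ₗ[R] M
  d : M →ₗ[R] E
  pairing_comm : ∀ a b, pairing a b = pairing b a
  leibniz : ∀ a b c, bracket a (bracket b c) = bracket (bracket a b) c + bracket b (bracket a c)
  bracket_add_swap : ∀ a b, bracket a b + bracket b a = d (pairing a b)
  pairing_d_pairing : ∀ a b c,
    pairing a (d (pairing b c)) = pairing (bracket a b) c + pairing b (bracket a c)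
  bracket_d_left : ∀ m a, bracket (d m) a = 0
  pairing_d_d : ∀ m n, pairing (d m) (d n) = 0

namespace DorfmanAlgebra

section CommRing

variable {R E M : Type*} [CommRing R] [AddCommGroup E] [Module R E] [AddCommGroup M] [Module R M]
  (A : DorfmanAlgebra R E M)

theorem bracket_swap (a b : E) : A.bracket b a = A.d (A.pairing a b) - A.bracket a b :=
  eq_sub_of_add_eq' (A.bracket_add_swap a b)

theorem bracket_d_right (a : E) (m : M) : A.bracket a (A.d m) = A.d (A.pairing a (A.d m)) := by
  rw [← A.bracket_add_swap, A.bracket_d_left, add_zero]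

theorem pairing_bracket_d (a b : E) (m : M) :
    A.pairing (A.bracket a b) (A.d m) =
      A.pairing a (A.d (A.pairing b (A.d m))) - A.pairing b (A.d (A.pairing a (A.d m))) := by
  rw [A.pairing_d_pairing a, A.bracket_d_right, add_sub_cancel_right]

theorem pairing_bracket_swap_left (a b c : E) :
    A.pairing (A.bracket b a) c =
      A.pairing (A.d (A.pairing a b)) c - A.pairing (A.bracket a b) c := by
  rw [A.bracket_swap, map_sub, LinearMap.sub_apply]

theorem pairing_bracket_swap_right (a b c : E) :
    A.pairing (A.bracket a c) b =
      A.pairing a (A.d (A.pairing b c)) - A.pairing (A.bracket a b) c := by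
  rw [A.pairing_d_pairing, A.pairing_comm _ b, add_sub_cancel_left]

theorem bracket_jacobiator (a b c : E) :
    A.bracket a (A.bracket b c) + A.bracket b (A.bracket c a) + A.bracket c (A.bracket a b) =
      A.d (A.pairing (A.bracket a b) c + A.pairing b (A.d (A.pairing a c))) := by
  rw [A.bracket_swap a c, map_sub, A.bracket_d_right, A.bracket_swap (A.bracket a b) c,
    A.leibniz a b c, map_add]
  abel

end CommRing

variable {E M : Type*} [AddCommGroup E] [Module ℝ E] [AddCommGroup M] [Module ℝ M]
  (A : DorfmanAlgebra ℝ E M)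

/-- The Courant bracket: the skew-symmetric part of the Dorfman bracket. -/
noncomputable def skewBracket : E →ₗ[ℝ] E →ₗ[ℝ] E :=
  A.bracket - (1 / 2 : ℝ) • A.pairing.compr₂ A.d

theorem skewBracket_apply (a b : E) :
    A.skewBracket a b = A.bracket a b - (1 / 2 : ℝ) • A.d (A.pairing a b) := rfl

theorem skewBracket_eq_half_sub_swap (a b : E) :
    A.skewBracket a b = (1 / 2 : ℝ) • (A.bracket a b - A.bracket b a) := by
  rw [skewBracket_apply, ← A.bracket_add_swap]
  module

theorem skewBracket_d_right (a : E) (m : M) :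
    A.skewBracket a (A.d m) = (1 / 2 : ℝ) • A.d (A.pairing a (A.d m)) := by
  rw [skewBracket_apply, A.bracket_d_right]
  module

theorem pairing_skewBracket_d (a b : E) (m : M) :
    A.pairing (A.skewBracket a b) (A.d m) = A.pairing (A.bracket a b) (A.d m) := by
  simp only [skewBracket_apply, map_sub, map_smul, LinearMap.sub_apply, LinearMap.smul_apply,
    A.pairing_d_d, smul_zero, sub_zero]

/-- Minus one half of the alternating part of `⟪a ∘ b, c⟫`, where `∘` is the Dorfman bracket; it is
the homotopy that controls the failure of the Jacobi identity for the Courant bracket. -/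
noncomputable def ternary : E →ₗ[ℝ] E →ₗ[ℝ] E →ₗ[ℝ] M :=
  let derivative := (LinearMap.llcomp ℝ E M M).compl₁₂ (A.pairing.compl₂ A.d) A.pairing;
  -(1 / 2 : ℝ) • A.bracket.compr₂ A.pairing + (1 / 4 : ℝ) • (derivative - derivative.flip
    + (A.pairing.compr₂ A.d).compr₂ A.pairing)

theorem ternary_apply (a b c : E) :
    A.ternary a b c = -(1 / 2 : ℝ) • A.pairing (A.bracket a b) c +
      (1 / 4 : ℝ) • (A.pairing a (A.d (A.pairing b c)) - A.pairing b (A.d (A.pairing a c))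
        + A.pairing (A.d (A.pairing a b)) c) := rfl

theorem ternary_swap_left (a b c : E) : A.ternary a b c = -A.ternary b a c := by
  simp only [ternary_apply, A.pairing_bracket_swap_left a b, A.pairing_comm b a]
  module

theorem ternary_swap_right (a b c : E) : A.ternary a b c = -A.ternary a c b := by
  simp only [ternary_apply, A.pairing_bracket_swap_right a b, A.pairing_comm c b,
    A.pairing_comm (A.d _)]
  module

theorem ternary_rotate (a b c : E) : A.ternary a b c = A.ternary c a b := by
  rw [A.ternary_swap_right a b c, A.ternary_swap_left a c b, neg_neg]

theorem skewBracket_skewBracket (a b c : E) :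
    A.skewBracket a (A.skewBracket b c) = A.bracket a (A.bracket b c)
      - A.d ((1 / 2 : ℝ) • A.pairing (A.bracket b c) a
        + (1 / 4 : ℝ) • A.pairing a (A.d (A.pairing b c))) := by
  simp only [skewBracket_apply, map_add, map_sub, map_smul, A.bracket_d_right,
    A.pairing_comm (A.bracket b c)]
  module

theorem skewBracket_jacobiator (a b c : E) :
    A.skewBracket a (A.skewBracket b c) + A.skewBracket b (A.skewBracket c a)
      + A.skewBracket c (A.skewBracket a b) = A.d (A.ternary a b c) := by
  have pairing_bca : A.pairing (A.bracket b c) a = A.pairing b (A.d (A.pairing a c))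
      - A.pairing (A.d (A.pairing a b)) c + A.pairing (A.bracket a b) c := by
    rw [A.pairing_bracket_swap_right b a, A.pairing_bracket_swap_left a b]
    abel
  have pairing_cab : A.pairing (A.bracket c a) b = A.pairing b (A.d (A.pairing a c))
      - A.pairing a (A.d (A.pairing b c)) + A.pairing (A.bracket a b) c := by
    rw [A.pairing_bracket_swap_left a c, A.pairing_bracket_swap_right a b, A.pairing_comm _ b]
    abel
  have jacobiator := A.bracket_jacobiator a b c
  simp only [skewBracket_skewBracket, ternary_apply, pairing_bca, pairing_cab, A.pairing_comm c a,
    A.pairing_comm c (A.d _), map_add, map_sub, map_smul] at jacobiator ⊢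
  linear_combination (norm := module) jacobiator

theorem ternary_d_right (a b : E) (m : M) :
    A.ternary a b (A.d m) = -(1 / 4 : ℝ) • A.pairing (A.bracket a b) (A.d m) := by
  rw [ternary_apply, A.pairing_d_d, A.pairing_bracket_d]
  module

theorem pairing_d_ternary (w a b c : E) :
    A.pairing w (A.d (A.ternary a b c)) = A.ternary (A.bracket w a) b c
      + A.ternary a (A.bracket w b) c + A.ternary a b (A.bracket w c) := by
  simp only [ternary_apply, map_add, map_sub, map_smul, A.pairing_d_pairing w, A.leibniz w,
    A.bracket_d_right w, LinearMap.add_apply]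
  module

theorem ternary_cocycle (w x y z : E) :
    A.ternary (A.skewBracket w x) y z - A.ternary (A.skewBracket w y) x z
      + A.ternary (A.skewBracket w z) x y + A.ternary (A.skewBracket x y) w z
      - A.ternary (A.skewBracket x z) w y + A.ternary (A.skewBracket y z) w x
    = (1 / 2 : ℝ) • (A.pairing w (A.d (A.ternary x y z)) - A.pairing x (A.d (A.ternary w y z))
      + A.pairing y (A.d (A.ternary w x z)) - A.pairing z (A.d (A.ternary w x y))) := by
  simp only [skewBracket_eq_half_sub_swap, map_sub, map_smul, LinearMap.sub_apply,
    LinearMap.smul_apply, A.pairing_d_ternary, A.ternary_swap_left _ (A.bracket _ _),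
    A.ternary_rotate _ _ (A.bracket _ _)]
  module

/-- The 2-term L∞-algebra given by the Courant bracket (Roytenberg–Weinstein). -/
noncomputable def toTwoTermLinfty : TwoTermLinfty E M where
  l1 := A.d
  l2 := A.skewBracket
  l2' := (1 / 2 : ℝ) • A.pairing.compl₂ A.d
  l3 := A.ternary
  skew a b := by
    rw [skewBracket_eq_half_sub_swap, skewBracket_eq_half_sub_swap]
    module
  alt₁ := A.ternary_swap_left
  alt₂ := A.ternary_swap_right
  ident_a a m := by simp [A.skewBracket_d_right]
  ident_b m n := by simp [A.pairing_d_d]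
  ident_c := A.skewBracket_jacobiator
  ident_d a b m := by
    simp only [A.ternary_d_right, LinearMap.smul_apply, LinearMap.compl₂_apply, map_smul,
      A.pairing_skewBracket_d, A.pairing_bracket_d]
    module
  ident_e w x y z := by
    simp only [LinearMap.smul_apply, LinearMap.compl₂_apply, A.ternary_cocycle]
    module

end DorfmanAlgebra

namespace TwoTermLinfty

variable {G0 G1 : Type*} [AddCommGroup G0] [Module ℝ G0] [AddCommGroup G1] [Module ℝ G1]
  (T : TwoTermLinfty G0 G1) (a b c : G0 × (G0 →ₗ[ℝ] G1)) (x y z : G0) (m n : G1)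

theorem l2_l1_left : T.l2 (T.l1 m) x = -T.l1 (T.l2' x m) := by
  rw [T.skew, T.ident_a]

theorem l3_rotate : T.l3 x y z = T.l3 y z x := by
  rw [T.alt₁, T.alt₂, neg_neg]

/-- The degree `0` part of the derivation up to homotopy of `T` attached to `(x, φ)`. -/
noncomputable def derivZero : (G0 × (G0 →ₗ[ℝ] G1)) →ₗ[ℝ] G0 →ₗ[ℝ] G0 :=
  T.l2.coprod (LinearMap.compRight ℝ T.l1)

/-- The degree `-1` part of the derivation up to homotopy of `T` attached to `(x, φ)`. -/
noncomputable def derivOne : (G0 × (G0 →ₗ[ℝ] G1)) →ₗ[ℝ] G1 →ₗ[ℝ] G1 :=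
  T.l2'.coprod (LinearMap.lcomp ℝ G1 T.l1)

/-- The homotopy up to which `derivZero` and `derivOne` are derivations of `l2`. At `(x, φ)` it is
`l₃(x, -, -)` minus the Chevalley–Eilenberg differential of `φ`. -/
noncomputable def derivHomotopy : (G0 × (G0 →ₗ[ℝ] G1)) →ₗ[ℝ] G0 →ₗ[ℝ] G0 →ₗ[ℝ] G1 :=
  let postcomp := (LinearMap.llcomp ℝ G0 G0 G1).compl₂ T.l2
  let action := (LinearMap.llcomp ℝ G0 G1 G1).flip.compl₂ T.l2'
  T.l3.coprod (postcomp - action + LinearMap.lflip.toLinearMap ∘ₗ action)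

theorem derivZero_apply : T.derivZero a y = T.l2 a.1 y + T.l1 (a.2 y) := rfl

theorem derivOne_apply : T.derivOne a n = T.l2' a.1 n + a.2 (T.l1 n) := rfl

theorem derivHomotopy_apply :
    T.derivHomotopy a y z =
      T.l3 a.1 y z + (a.2 (T.l2 y z) - T.l2' y (a.2 z) + T.l2' z (a.2 y)) := rfl

theorem derivHomotopy_swap : T.derivHomotopy a y z = -T.derivHomotopy a z y := by
  simp only [derivHomotopy_apply, T.alt₂ a.1 y z, T.skew y z, map_neg]
  abel

theorem derivZero_l1 : T.derivZero a (T.l1 n) = T.l1 (T.derivOne a n) := by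
  rw [derivZero_apply, derivOne_apply, map_add, T.ident_a]

theorem derivZero_l2 :
    T.derivZero a (T.l2 y z) =
      T.l2 (T.derivZero a y) z + T.l2 y (T.derivZero a z) + T.l1 (T.derivHomotopy a y z) := by
  have jacobi := T.ident_c a.1 y z
  rw [T.skew z a.1, T.skew z (T.l2 a.1 y), map_neg] at jacobi
  simp only [derivZero_apply, derivHomotopy_apply, map_add, map_sub, LinearMap.add_apply,
    T.l2_l1_left, ← T.ident_a]
  linear_combination (norm := module) jacobi

theorem derivOne_l2' :
    T.derivOne a (T.l2' y n) =
      T.l2' (T.derivZero a y) n + T.l2' y (T.derivOne a n) + T.derivHomotopy a y (T.l1 n) := by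
  simp only [derivZero_apply, derivOne_apply, derivHomotopy_apply, map_add, LinearMap.add_apply,
    T.ident_d, T.ident_a, T.ident_b (a.2 y)]
  abel

theorem derivOne_l3 :
    T.derivOne a (T.l3 x y z) =
      T.l3 (T.derivZero a x) y z + T.l3 x (T.derivZero a y) z + T.l3 x y (T.derivZero a z)
      + T.l2' x (T.derivHomotopy a y z) - T.l2' y (T.derivHomotopy a x z)
      + T.l2' z (T.derivHomotopy a x y) - T.derivHomotopy a (T.l2 x y) z
      + T.derivHomotopy a (T.l2 x z) y - T.derivHomotopy a (T.l2 y z) x := by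
  have cocycle := T.ident_e a.1 x y z
  have jacobi := congrArg a.2 (T.ident_c x y z)
  rw [T.skew z x, T.skew x (T.l2 y z), T.skew z (T.l2 x y), map_neg, T.skew y (T.l2 x z)] at jacobi
  simp only [T.alt₁ _ a.1, T.alt₁ (T.l2 a.1 y) x, T.l3_rotate (T.l2 a.1 z), map_add, map_neg]
    at cocycle jacobi
  simp only [derivZero_apply, derivOne_apply, derivHomotopy_apply, map_add, map_sub,
    LinearMap.add_apply, T.l3_rotate (T.l1 _), T.alt₂ x (T.l1 _), T.ident_d]
  linear_combination (norm := module) -cocycle - jacobi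

/-- The bracket `a ∘ b` on `g₀ ⊕ Hom(g₀, g₋₁)`: the derivation attached to `a` acts on `b`. -/
noncomputable def dorfman :
    (G0 × (G0 →ₗ[ℝ] G1)) →ₗ[ℝ] (G0 × (G0 →ₗ[ℝ] G1)) →ₗ[ℝ] (G0 × (G0 →ₗ[ℝ] G1)) :=
  let fst := LinearMap.fst ℝ G0 (G0 →ₗ[ℝ] G1)
  let snd := LinearMap.snd ℝ G0 (G0 →ₗ[ℝ] G1)
  let commutator := (LinearMap.llcomp ℝ G0 G1 G1).compl₁₂ T.derivOne snd
    - (LinearMap.llcomp ℝ G0 G0 G1).flip.compl₁₂ T.derivZero snd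
  (LinearMap.prodEquiv ℝ).toLinearMap ∘ₗ
    (T.derivZero.compl₂ fst).prod (commutator + T.derivHomotopy.compl₂ fst)

theorem dorfman_fst : (T.dorfman a b).1 = T.derivZero a b.1 := rfl

theorem dorfman_snd_apply :
    (T.dorfman a b).2 z =
      T.derivOne a (b.2 z) - b.2 (T.derivZero a z) + T.derivHomotopy a b.1 z := rfl

theorem derivZero_dorfman :
    T.derivZero (T.dorfman a b) z =
      T.derivZero a (T.derivZero b z) - T.derivZero b (T.derivZero a z) := by
  simp only [T.derivZero_apply (T.dorfman a b), T.derivZero_apply b, dorfman_fst,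
    dorfman_snd_apply, map_add, map_sub, T.derivZero_l2, T.derivZero_l1]
  abel

theorem derivOne_dorfman :
    T.derivOne (T.dorfman a b) n =
      T.derivOne a (T.derivOne b n) - T.derivOne b (T.derivOne a n) := by
  simp only [T.derivOne_apply (T.dorfman a b), T.derivOne_apply b, dorfman_fst,
    dorfman_snd_apply, map_add, T.derivOne_l2', T.derivZero_l1]
  abel

theorem derivHomotopy_dorfman :
    T.derivHomotopy (T.dorfman a b) y z =
      T.derivOne a (T.derivHomotopy b y z)
        - T.derivHomotopy b (T.derivZero a y) z - T.derivHomotopy b y (T.derivZero a z)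
      - (T.derivOne b (T.derivHomotopy a y z)
        - T.derivHomotopy a (T.derivZero b y) z - T.derivHomotopy a y (T.derivZero b z)) := by
  simp only [T.derivHomotopy_apply (T.dorfman a b), T.derivHomotopy_apply b, T.derivZero_apply b,
    T.derivOne_apply b, dorfman_fst, dorfman_snd_apply, map_add, map_sub, LinearMap.add_apply,
    T.derivZero_l2, T.derivOne_l2', T.derivOne_l3, T.derivHomotopy_swap a (T.l1 _),
    T.derivHomotopy_swap a y (T.l2 _ _), T.derivHomotopy_swap a (T.l2 y z)]
  abel

theorem dorfman_leibniz :
    T.dorfman a (T.dorfman b c) = T.dorfman (T.dorfman a b) c + T.dorfman b (T.dorfman a c) := by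
  refine Prod.ext ?_ (LinearMap.ext fun z => ?_)
  · simp only [Prod.fst_add, dorfman_fst, T.derivZero_dorfman]
    abel
  · simp only [Prod.snd_add, LinearMap.add_apply, dorfman_fst, dorfman_snd_apply, map_add,
      map_sub, T.derivZero_dorfman, T.derivOne_dorfman, T.derivHomotopy_dorfman]
    abel

/-- The symmetric pairing `⟪(x, φ), (y, ψ)⟫ = φ y + ψ x`. -/
noncomputable def evalPairing :
    (G0 × (G0 →ₗ[ℝ] G1)) →ₗ[ℝ] (G0 × (G0 →ₗ[ℝ] G1)) →ₗ[ℝ] G1 :=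
  let eval := (LinearMap.snd ℝ G0 (G0 →ₗ[ℝ] G1)).compl₂ (LinearMap.fst ℝ G0 (G0 →ₗ[ℝ] G1))
  eval + eval.flip

theorem evalPairing_apply : evalPairing a b = a.2 b.1 + b.2 a.1 := rfl

/-- The map `n ↦ (l₁ n, z ↦ l₂ (z, n))`. -/
noncomputable def differential : G1 →ₗ[ℝ] G0 × (G0 →ₗ[ℝ] G1) :=
  T.l1.prod T.l2'.flip

theorem differential_apply : T.differential n = (T.l1 n, T.l2'.flip n) := rfl

theorem evalPairing_differential : evalPairing a (T.differential n) = T.derivOne a n :=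
  add_comm _ _

theorem derivZero_differential : T.derivZero (T.differential n) = 0 := by
  ext y
  simp [derivZero_apply, differential_apply, T.l2_l1_left]

theorem derivOne_differential : T.derivOne (T.differential n) = 0 := by
  ext m
  simp [derivOne_apply, differential_apply, T.ident_b n m]

theorem derivHomotopy_differential : T.derivHomotopy (T.differential n) = 0 := by
  ext y z
  simp only [derivHomotopy_apply, differential_apply, T.l3_rotate (T.l1 n), T.ident_d,
    LinearMap.flip_apply, LinearMap.zero_apply]
  abel

theorem dorfman_differential_left : T.dorfman (T.differential n) a = 0 := by
  refine Prod.ext ?_ (LinearMap.ext fun z => ?_) <;>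
  simp [dorfman_fst, dorfman_snd_apply, T.derivZero_differential, T.derivOne_differential,
    T.derivHomotopy_differential]

theorem dorfman_add_swap :
    T.dorfman a b + T.dorfman b a = T.differential (evalPairing a b) := by
  refine Prod.ext ?_ (LinearMap.ext fun z => ?_)
  · simp only [Prod.fst_add, dorfman_fst, derivZero_apply, differential_apply, evalPairing_apply,
      T.skew b.1 a.1, map_add]
    abel
  · simp only [Prod.snd_add, LinearMap.add_apply, dorfman_snd_apply, derivZero_apply,
      derivOne_apply, derivHomotopy_apply, differential_apply, evalPairing_apply,
      T.alt₁ b.1 a.1, map_add, LinearMap.flip_apply]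
    abel

theorem derivOne_evalPairing :
    T.derivOne a (evalPairing b c) =
      evalPairing (T.dorfman a b) c + evalPairing b (T.dorfman a c) := by
  simp only [evalPairing_apply, dorfman_fst, dorfman_snd_apply, map_add,
    T.derivHomotopy_swap a b.1]
  abel

/-- The Dorfman algebra of a 2-term L∞-algebra; its Courant bracket is `l̃₂`. -/
noncomputable def toDorfmanAlgebra : DorfmanAlgebra ℝ (G0 × (G0 →ₗ[ℝ] G1)) G1 where
  bracket := T.dorfman
  pairing := evalPairing
  d := T.differential
  pairing_comm _ _ := add_comm _ _
  leibniz := T.dorfman_leibniz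
  bracket_add_swap := T.dorfman_add_swap
  pairing_d_pairing a b c := by rw [T.evalPairing_differential, T.derivOne_evalPairing]
  bracket_d_left m a := T.dorfman_differential_left a m
  pairing_d_d m n := by
    rw [T.evalPairing_differential, T.derivOne_differential, LinearMap.zero_apply]

theorem toDorfmanAlgebra_skewBracket :
    T.toDorfmanAlgebra.skewBracket a b =
      (T.l2 a.1 b.1 + (1/2 : ℝ) • T.l1 (a.2 b.1) - (1/2 : ℝ) • T.l1 (b.2 a.1),
       T.l3 a.1 b.1 + (T.l2' a.1) ∘ₗ b.2 - b.2 ∘ₗ (T.l2 a.1)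
         - (1/2 : ℝ) • T.l2'.flip (b.2 a.1)
         - (T.l2' b.1) ∘ₗ a.2 + a.2 ∘ₗ (T.l2 b.1)
         + (1/2 : ℝ) • T.l2'.flip (a.2 b.1)
         + a.2 ∘ₗ (T.l1 ∘ₗ b.2) - b.2 ∘ₗ (T.l1 ∘ₗ a.2)) := by
  rw [DorfmanAlgebra.skewBracket_apply]
  refine Prod.ext ?_ (LinearMap.ext fun z => ?_)
  · simp only [toDorfmanAlgebra, Prod.fst_add, Prod.fst_sub, Prod.smul_fst, dorfman_fst,
      derivZero_apply, differential_apply, evalPairing_apply, map_add]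
    module
  · simp only [toDorfmanAlgebra, Prod.snd_add, Prod.snd_sub, Prod.smul_snd, dorfman_snd_apply,
      derivZero_apply, derivOne_apply, derivHomotopy_apply, differential_apply, evalPairing_apply,
      map_add, LinearMap.add_apply, LinearMap.sub_apply, LinearMap.smul_apply,
      LinearMap.comp_apply, LinearMap.flip_apply]
    module

theorem toDorfmanAlgebra_ternary :
    T.toDorfmanAlgebra.ternary a b c =
      -(1/2 : ℝ) • T.l3 a.1 b.1 c.1
      - (1/2 : ℝ) • (c.2 (T.l2 a.1 b.1) + a.2 (T.l2 b.1 c.1) + b.2 (T.l2 c.1 a.1))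
      - (1/4 : ℝ) • (c.2 (T.l1 (a.2 b.1)) - c.2 (T.l1 (b.2 a.1))
          + a.2 (T.l1 (b.2 c.1)) - a.2 (T.l1 (c.2 b.1))
          + b.2 (T.l1 (c.2 a.1)) - b.2 (T.l1 (a.2 c.1)))
      - (1/4 : ℝ) • (T.l2' a.1 (b.2 c.1) - T.l2' a.1 (c.2 b.1)
          + T.l2' b.1 (c.2 a.1) - T.l2' b.1 (a.2 c.1)
          + T.l2' c.1 (a.2 b.1) - T.l2' c.1 (b.2 a.1)) := by
  simp only [DorfmanAlgebra.ternary_apply, toDorfmanAlgebra, evalPairing_apply,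
    differential_apply, dorfman_fst, dorfman_snd_apply, derivZero_apply, derivOne_apply,
    derivHomotopy_apply, LinearMap.add_apply, LinearMap.flip_apply, map_add,
    T.skew c.1 a.1, map_neg]
  module

end TwoTermLinfty

/-- Theorem 4.2 of Lang–Sheng–Xu: given a 2-term L∞-algebra `(G0, G1, l1, l2, l2', l3)`,
the associated data `g̃` with `g̃₋₁ = G1`, `g̃₀ = G0 ⊕ Hom(G0, G1)` and the explicit
structure maps `l̃₁, l̃₂, l̃₃` is again a 2-term L∞-algebra. -/
theorem tilde_is_twoTermLinfty {G0 G1 : Type*} [AddCommGroup G0] [Module ℝ G0]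
    [AddCommGroup G1] [Module ℝ G1] (T : TwoTermLinfty G0 G1) :
    ∃ Tt : TwoTermLinfty (G0 × (G0 →ₗ[ℝ] G1)) G1,
      -- l̃₁(n) = (l₁(n), z ↦ l₂(z,n))
      (∀ n : G1, Tt.l1 n = (T.l1 n, T.l2'.flip n)) ∧
      -- l̃₂((x,φ),(y,ψ))
      (∀ a b : G0 × (G0 →ₗ[ℝ] G1), Tt.l2 a b =
        (T.l2 a.1 b.1 + (1/2 : ℝ) • T.l1 (a.2 b.1) - (1/2 : ℝ) • T.l1 (b.2 a.1),
         T.l3 a.1 b.1 + (T.l2' a.1) ∘ₗ b.2 - b.2 ∘ₗ (T.l2 a.1)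
           - (1/2 : ℝ) • T.l2'.flip (b.2 a.1)
           - (T.l2' b.1) ∘ₗ a.2 + a.2 ∘ₗ (T.l2 b.1)
           + (1/2 : ℝ) • T.l2'.flip (a.2 b.1)
           + a.2 ∘ₗ (T.l1 ∘ₗ b.2) - b.2 ∘ₗ (T.l1 ∘ₗ a.2))) ∧
      -- l̃₂((x,φ),n)
      (∀ (a : G0 × (G0 →ₗ[ℝ] G1)) (n : G1), Tt.l2' a n =
        (1/2 : ℝ) • T.l2' a.1 n + (1/2 : ℝ) • a.2 (T.l1 n)) ∧
      -- l̃₃((x₁,φ₁),(x₂,φ₂),(x₃,φ₃))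
      (∀ a b c : G0 × (G0 →ₗ[ℝ] G1), Tt.l3 a b c =
        -(1/2 : ℝ) • T.l3 a.1 b.1 c.1
        - (1/2 : ℝ) • (c.2 (T.l2 a.1 b.1) + a.2 (T.l2 b.1 c.1) + b.2 (T.l2 c.1 a.1))
        - (1/4 : ℝ) • (c.2 (T.l1 (a.2 b.1)) - c.2 (T.l1 (b.2 a.1))
            + a.2 (T.l1 (b.2 c.1)) - a.2 (T.l1 (c.2 b.1))
            + b.2 (T.l1 (c.2 a.1)) - b.2 (T.l1 (a.2 c.1)))
        - (1/4 : ℝ) • (T.l2' a.1 (b.2 c.1) - T.l2' a.1 (c.2 b.1)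
            + T.l2' b.1 (c.2 a.1) - T.l2' b.1 (a.2 c.1)
            + T.l2' c.1 (a.2 b.1) - T.l2' c.1 (b.2 a.1))) := by
  refine ⟨T.toDorfmanAlgebra.toTwoTermLinfty, fun _ => rfl, T.toDorfmanAlgebra_skewBracket,
    fun a n => ?_, T.toDorfmanAlgebra_ternary⟩
  calc (1/2 : ℝ) • T.toDorfmanAlgebra.pairing a (T.toDorfmanAlgebra.d n)
      = (1/2 : ℝ) • T.derivOne a n := congrArg _ (T.evalPairing_differential a n)
    _ = (1/2 : ℝ) • T.l2' a.1 n + (1/2 : ℝ) • a.2 (T.l1 n) := smul_add _ _ _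
end

section
/- Let V be a real vector space and let gl(V) = End(V) with commutator [A,B] = A∘B − B∘A. Set g̃₋₁ := V and g̃₀ := V ⊕ gl(V), and define: l̃₁(m) := (m, 0); l̃₂((u,A),(v,B)) := ( ½(A(v) − B(u)), [A,B] ); l̃₂((u,A),m) := ½A(m); l̃₃((u,A),(v,B),(w,C)) := −¼( [A,B](w) + [B,C](u) + [C,A](v) ). Then (g̃₀, g̃₋₁, l̃₁, l̃₂, l̃₃) is a 2-term L∞-algebra. (This is the 2-term L∞-algebra associated to the omni-Lie algebra V ⊕ gl(V).) -/
/-!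
The differential `m ↦ (m, 0)` is injective, so every identity with values in `g̃₋₁ = V` can be
checked in `g̃₀` after applying it. There `l̃₂` on `g̃₋₁` is the restriction of the bracket and
`l̃₃` is its Jacobiator, and the identities become properties of the Jacobiator of an arbitrary
skew-symmetric bracket. What remains is to compute the Jacobiator of `l̃₂`. This works for every
representation `V` of a Lie algebra `L` and every coefficient `t` in place of `½`: the Jacobiator
of `(t (A v - B u), [A, B])` is `t² - t` times the cyclic sum of `[A, B] w`.
-/

section Jacobiator

variable {R M : Type*} [CommRing R] [AddCommGroup M] [Module R M]

/-- The Jacobiator of a bilinear bracket: the cyclic sum measuring the failure of the Jacobi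
identity. -/
def jacobiator (B : M →ₗ[R] M →ₗ[R] M) (x y z : M) : M :=
  B x (B y z) + B y (B z x) + B z (B x y)

variable {B : M →ₗ[R] M →ₗ[R] M}

theorem jacobiator_rotate (x y z : M) : jacobiator B x y z = jacobiator B y z x := by
  unfold jacobiator
  abel

theorem jacobiator_swap_left (hB : ∀ x y, B x y = -B y x) (x y z : M) :
    jacobiator B x y z = -jacobiator B y x z := by
  simp only [jacobiator, hB z y, hB z x, hB y x, map_neg]
  abel

theorem jacobiator_swap_right (hB : ∀ x y, B x y = -B y x) (x y z : M) :
    jacobiator B x y z = -jacobiator B x z y := by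
  rw [jacobiator_rotate, jacobiator_swap_left hB, ← jacobiator_rotate]

theorem jacobiator_eq_commutator_sub (hB : ∀ x y, B x y = -B y x) (x y z : M) :
    jacobiator B x y z = B x (B y z) - B y (B x z) - B (B x y) z := by
  simp only [jacobiator, hB z x, hB z (B x y), map_neg]
  abel

theorem jacobiator_alternating_sum (hB : ∀ x y, B x y = -B y x) (w x y z : M) :
    jacobiator B (B w x) y z - jacobiator B (B w y) x z + jacobiator B (B w z) x y
        + jacobiator B (B x y) w z - jacobiator B (B x z) w y + jacobiator B (B y z) w x
      = B w (jacobiator B x y z) - B x (jacobiator B w y z)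
        + B y (jacobiator B w x z) - B z (jacobiator B w x y) := by
  have jacobiator_bracket (a b c d : M) : jacobiator B (B a b) c d
      = B (B a b) (B c d) + B c (B d (B a b)) - B d (B c (B a b)) := by
    simp only [jacobiator, hB (B a b) c, map_neg]
    abel
  -- The products of two brackets cancel in pairs; the nested ones make up the right-hand side.
  simp only [jacobiator_bracket, hB (B y z) (B w x), hB (B x z) (B w y), hB (B x y) (B w z)]
  simp only [jacobiator, map_add, map_neg, hB y w, hB z w, hB z x]
  abel

end Jacobiator

/-- A skew-symmetric bracket `l2` on `G0`, together with an injection `l1` whose image absorbs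
brackets (through `l2'`) and contains all Jacobiators (through `l3`), is a 2-term L∞-algebra. -/
def TwoTermLinfty.ofInjective {G0 G1 : Type*} [AddCommGroup G0] [Module ℝ G0]
    [AddCommGroup G1] [Module ℝ G1] (l1 : G1 →ₗ[ℝ] G0) (l2 : G0 →ₗ[ℝ] G0 →ₗ[ℝ] G0)
    (l2' : G0 →ₗ[ℝ] G1 →ₗ[ℝ] G1) (l3 : G0 →ₗ[ℝ] G0 →ₗ[ℝ] G0 →ₗ[ℝ] G1)
    (l1_injective : Function.Injective l1) (skew : ∀ x y, l2 x y = -l2 y x)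
    (l1_l2' : ∀ x m, l1 (l2' x m) = l2 x (l1 m))
    (l1_l3 : ∀ x y z, l1 (l3 x y z) = jacobiator l2 x y z) : TwoTermLinfty G0 G1 where
  l1 := l1
  l2 := l2
  l2' := l2'
  l3 := l3
  skew := skew
  alt₁ x y z := l1_injective <| by
    simpa only [map_neg, l1_l3] using jacobiator_swap_left skew x y z
  alt₂ x y z := l1_injective <| by
    simpa only [map_neg, l1_l3] using jacobiator_swap_right skew x y z
  ident_a := l1_l2'
  ident_b m n := l1_injective <| by
    simpa only [map_neg, l1_l2'] using skew (l1 m) (l1 n)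
  ident_c x y z := (l1_l3 x y z).symm
  ident_d x y m := l1_injective <| by
    simpa only [map_sub, l1_l2', l1_l3] using jacobiator_eq_commutator_sub skew x y (l1 m)
  ident_e w x y z := l1_injective <| by
    simpa only [map_add, map_sub, l1_l2', l1_l3] using jacobiator_alternating_sum skew w x y z

section CyclicSum

variable {R M N : Type*} [CommRing R] [AddCommGroup M] [Module R M] [AddCommGroup N] [Module R N]

/-- The sum of a trilinear map over the cyclic permutations of its arguments, again as a trilinear
map. -/
def cyclicSum (T : M →ₗ[R] M →ₗ[R] M →ₗ[R] N) : M →ₗ[R] M →ₗ[R] M →ₗ[R] N :=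
  T + (LinearMap.lflip.toLinearMap ∘ₗ T).flip + LinearMap.lflip.toLinearMap ∘ₗ T.flip

theorem cyclicSum_apply (T : M →ₗ[R] M →ₗ[R] M →ₗ[R] N) (x y z : M) :
    cyclicSum T x y z = T x y z + T y z x + T z x y :=
  rfl

end CyclicSum

section OmniLie

variable {R L V : Type*} [CommRing R] [LieRing L] [LieAlgebra R L] [AddCommGroup V] [Module R V]
  [LieRingModule L V] [LieModule R L V]

variable (R L V) in
/-- The trilinear map `((u, A), (v, B), (w, C)) ↦ [A, B] w` on `V ⊕ L`. Its cyclic sum is, up to a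
scalar, the Jacobiator of `omniBracket`. -/
def bracketAction : (V × L) →ₗ[R] (V × L) →ₗ[R] (V × L) →ₗ[R] V :=
  ((LieModule.toEnd R L L : L →ₗ[R] L →ₗ[R] L).compl₁₂ (.snd R V L) (.snd R V L)).compr₂
    (LinearMap.lcomp R V (.fst R V L) ∘ₗ (LieModule.toEnd R L V : L →ₗ[R] V →ₗ[R] V))

theorem bracketAction_apply (x y z : V × L) : bracketAction R L V x y z = ⁅⁅x.2, y.2⁆, z.1⁆ :=
  rfl

variable (L V) in
/-- The action of `V ⊕ L` on `V` through `L`, scaled by `t`. -/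
def omniAction (t : R) : (V × L) →ₗ[R] V →ₗ[R] V :=
  t • (LieModule.toEnd R L V : L →ₗ[R] V →ₗ[R] V) ∘ₗ .snd R V L

theorem omniAction_apply (t : R) (x : V × L) (m : V) : omniAction L V t x m = t • ⁅x.2, m⁆ :=
  rfl

variable (L V) in
/-- The bracket `((u, A), (v, B)) ↦ (t (A v - B u), [A, B])` on `V ⊕ L`. For `t = 1` it is the
semidirect product, for `t = 1/2` and `L = gl(V)` the skew bracket of the omni-Lie algebra. -/
def omniBracket (t : R) : (V × L) →ₗ[R] (V × L) →ₗ[R] (V × L) :=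
  LinearMap.mk₂ R (fun x y => (omniAction L V t x y.1 - omniAction L V t y x.1, ⁅x.2, y.2⁆))
    (fun x x' y => by simp [add_sub_add_comm])
    (fun r x y => by simp [smul_sub])
    (fun x y y' => by simp [add_sub_add_comm])
    (fun r x y => by simp [smul_sub])

theorem omniBracket_apply (t : R) (x y : V × L) :
    omniBracket L V t x y = (t • (⁅x.2, y.1⁆ - ⁅y.2, x.1⁆), ⁅x.2, y.2⁆) :=
  Prod.ext (smul_sub t _ _).symm rfl

theorem omniBracket_skew (t : R) (x y : V × L) :
    omniBracket L V t x y = -omniBracket L V t y x := by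
  simp only [omniBracket_apply, Prod.neg_mk, lie_skew, ← smul_neg, neg_sub]

theorem omniBracket_inl (t : R) (x : V × L) (m : V) :
    omniBracket L V t x (LinearMap.inl R V L m) = LinearMap.inl R V L (omniAction L V t x m) := by
  simp only [omniBracket_apply, omniAction_apply, LinearMap.inl_apply, zero_lie, lie_zero, sub_zero]

theorem jacobiator_omniBracket (t : R) (x y z : V × L) :
    jacobiator (omniBracket L V t) x y z
      = LinearMap.inl R V L ((t ^ 2 - t) • cyclicSum (bracketAction R L V) x y z) := by
  simp only [jacobiator, omniBracket_apply, LinearMap.inl_apply, Prod.mk_add_mk, lie_jacobi,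
    cyclicSum_apply, bracketAction_apply, lie_smul, lie_sub, lie_lie]
  congr 1
  module

end OmniLie

theorem omniLie_twoTermLinfty_general (L V : Type*) [LieRing L] [LieAlgebra ℝ L] [AddCommGroup V]
    [Module ℝ V] [LieRingModule L V] [LieModule ℝ L V] (t : ℝ) :
    ∃ T : TwoTermLinfty (V × L) V,
      (∀ m : V, T.l1 m = (m, 0)) ∧
      (∀ a b : V × L, T.l2 a b = (t • (⁅a.2, b.1⁆ - ⁅b.2, a.1⁆), ⁅a.2, b.2⁆)) ∧
      (∀ (a : V × L) (m : V), T.l2' a m = t • ⁅a.2, m⁆) ∧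
      (∀ a b c : V × L, T.l3 a b c =
        (t ^ 2 - t) • (⁅⁅a.2, b.2⁆, c.1⁆ + ⁅⁅b.2, c.2⁆, a.1⁆ + ⁅⁅c.2, a.2⁆, b.1⁆)) :=
  ⟨.ofInjective (LinearMap.inl ℝ V L) (omniBracket L V t) (omniAction L V t)
      ((t ^ 2 - t) • cyclicSum (bracketAction ℝ L V)) LinearMap.inl_injective (omniBracket_skew t)
      (fun x m => (omniBracket_inl t x m).symm)
      (fun x y z => (jacobiator_omniBracket t x y z).symm),
    fun _ => rfl, omniBracket_apply t, omniAction_apply t, fun _ _ _ => rfl⟩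

/-- The 2-term L∞-algebra associated to the omni-Lie algebra `V ⊕ gl(V)`:
`g̃₋₁ = V`, `g̃₀ = V ⊕ gl(V)`, with `l̃₁(m) = (m,0)`,
`l̃₂((u,A),(v,B)) = (½(Av − Bu), [A,B])`, `l̃₂((u,A),m) = ½ Am`,
`l̃₃((u,A),(v,B),(w,C)) = −¼([A,B]w + [B,C]u + [C,A]v)`. -/
theorem omniLie_twoTermLinfty (V : Type*) [AddCommGroup V] [Module ℝ V] :
    ∃ T : TwoTermLinfty (V × Module.End ℝ V) V,
      (∀ m : V, T.l1 m = (m, 0)) ∧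
      (∀ a b : V × Module.End ℝ V, T.l2 a b =
        ((1/2 : ℝ) • (a.2 b.1 - b.2 a.1), a.2 * b.2 - b.2 * a.2)) ∧
      (∀ (a : V × Module.End ℝ V) (m : V), T.l2' a m = (1/2 : ℝ) • a.2 m) ∧
      (∀ a b c : V × Module.End ℝ V, T.l3 a b c =
        -(1/4 : ℝ) • ((a.2 * b.2 - b.2 * a.2) c.1 + (b.2 * c.2 - c.2 * b.2) a.1
          + (c.2 * a.2 - a.2 * c.2) b.1)) := by
  let _ : LieRing (Module.End ℝ V) := LieRing.ofAssociativeRing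
  have quarter : (1 / 2 : ℝ) ^ 2 - 1 / 2 = -(1 / 4) := by norm_num
  exact quarter ▸ omniLie_twoTermLinfty_general (Module.End ℝ V) V (1 / 2)
end
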